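/- The family {P_J} indexed by pairs of twin binary trees, where P_J is the sum of the fundamental basis elements F_σ of FQSym over permutations σ with P-symbol of shape J, spans a Hopf subalgebra of FQSym (i.e., is closed under the product and coproduct of FQSym). -/

import Mathlib

open scoped Classical

/-- Baxter adjacency relations on words over the alphabet of natural numbers. -/
def BaxterAdj (w w' : List ℕ) : Prop :=
  (∃ (a b c d : ℕ) (u v : List ℕ), a ≤ b ∧ b < c ∧ c ≤ d ∧
      w = c :: (u ++ a :: d :: (v ++ [b])) ∧ w' = c :: (u ++ d :: a :: (v ++ [b]))) ∨
  (∃ (a b c d : ℕ) (u v : List ℕ), a < b ∧ b ≤ c ∧ c < d ∧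
      w = b :: (u ++ d :: a :: (v ++ [c])) ∧ w' = b :: (u ++ a :: d :: (v ++ [c])))

/-- One rewriting step: an adjacency applied inside a word (congruence context). -/
def BaxterStep (w w' : List ℕ) : Prop :=
  ∃ (p s u v : List ℕ), BaxterAdj u v ∧ w = p ++ u ++ s ∧ w' = p ++ v ++ s

/-- The Baxter congruence: the equivalence generated by the Baxter steps. -/
def BaxterEquiv : List ℕ → List ℕ → Prop := Relation.EqvGen BaxterStep

/-- Sylvester adjacency: a c u b ≡ c a u b when a ≤ b < c. -/
def SylvAdj (w w' : List ℕ) : Prop :=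
  ∃ (a b c : ℕ) (u : List ℕ), a ≤ b ∧ b < c ∧
    w = a :: c :: (u ++ [b]) ∧ w' = c :: a :: (u ++ [b])

def SylvStep (w w' : List ℕ) : Prop :=
  ∃ (p s u v : List ℕ), SylvAdj u v ∧ w = p ++ u ++ s ∧ w' = p ++ v ++ s

def SylvEquiv : List ℕ → List ℕ → Prop := Relation.EqvGen SylvStep

/-- #-sylvester adjacency: b u a c ≡ b u c a when a < b ≤ c. -/
def SylvHAdj (w w' : List ℕ) : Prop :=
  ∃ (a b c : ℕ) (u : List ℕ), a < b ∧ b ≤ c ∧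
    w = b :: (u ++ [a, c]) ∧ w' = b :: (u ++ [c, a])

def SylvHStep (w w' : List ℕ) : Prop :=
  ∃ (p s u v : List ℕ), SylvHAdj u v ∧ w = p ++ u ++ s ∧ w' = p ++ v ++ s

def SylvHEquiv : List ℕ → List ℕ → Prop := Relation.EqvGen SylvHStep

/-- The standardized word of `u`: position `i` receives the rank of the letter `u i`
(ties broken from left to right), ranks starting at `1`. -/
def std (u : List ℕ) : List ℕ :=
  (List.range u.length).map fun i =>
    ((List.range u.length).filter fun j =>
      decide (u.getD j 0 < u.getD i 0 ∨ (u.getD j 0 = u.getD i 0 ∧ j < i))).length + 1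

/-- The maximal letter of a word. -/
def wordMax (u : List ℕ) : ℕ := u.foldr max 0

/-- The Schützenberger transformation: reverse and complement each letter w.r.t. max + 1. -/
def schutz (u : List ℕ) : List ℕ := u.reverse.map fun x => wordMax u + 1 - x

/-- Labeled binary trees. -/
inductive BT where
  | leaf : BT
  | node : BT → ℕ → BT → BT
deriving DecidableEq

/-- Leaf insertion into a left binary search tree. -/
def leafInsL : BT → ℕ → BT
  | .leaf, a => .node .leaf a .leaf
  | .node l b r, a => if a < b then .node (leafInsL l a) b r else .node l b (leafInsL r a)

/-- Leaf insertion into a right binary search tree. -/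
def leafInsR : BT → ℕ → BT
  | .leaf, a => .node .leaf a .leaf
  | .node l b r, a => if a ≤ b then .node (leafInsR l a) b r else .node l b (leafInsR r a)

/-- The lower restricted tree `T_{≤ a}` of a right binary search tree. -/
def splitLE : BT → ℕ → BT
  | .leaf, _ => .leaf
  | .node l b r, a => if b ≤ a then .node l b (splitLE r a) else splitLE l a

/-- The higher restricted tree `T_{> a}` of a right binary search tree. -/
def splitGT : BT → ℕ → BT
  | .leaf, _ => .leaf
  | .node l b r, a => if b ≤ a then splitGT r a else .node (splitGT l a) b r

/-- Root insertion into a right binary search tree. -/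
def rootIns (t : BT) (a : ℕ) : BT := .node (splitLE t a) a (splitGT t a)

/-- The left tree of the P-symbol: leaf insertions from left to right. -/
def insL (u : List ℕ) : BT := u.foldl leafInsL .leaf

/-- The right tree of the P-symbol: root insertions from left to right. -/
def insR (u : List ℕ) : BT := u.foldl rootIns .leaf

/-- The P-symbol of a word. -/
def Psymb (u : List ℕ) : BT × BT := (insL u, insR u)

/-- Unlabeled binary trees. -/
inductive UBT where
  | leaf : UBT
  | node : UBT → UBT → UBT
deriving DecidableEq

/-- The shape of a labeled binary tree. -/
def shape : BT → UBT
  | .leaf => .leaf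
  | .node l _ r => .node (shape l) (shape r)

/-- The shape of the P-symbol of a word. -/
def Pshape (u : List ℕ) : UBT × UBT := (shape (insL u), shape (insR u))

/-- Number of internal nodes. -/
def sizeU : UBT → ℕ
  | .leaf => 0
  | .node l r => sizeU l + sizeU r + 1

/-- Orientations of the leaves, from left to right: `true` means right-oriented
(the leaf is the right child of its parent); the parameter is the orientation
assigned if the tree is reduced to a leaf. -/
def loU : UBT → Bool → List Bool
  | .leaf, b => [b]
  | .node l r, _ => loU l false ++ loU r true

/-- Leaf orientations of a labeled binary tree. -/
def loB : BT → Bool → List Bool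
  | .leaf, b => [b]
  | .node l _ r, _ => loB l false ++ loB r true

/-- The canopy: orientations of the leaves except the first and the last one. -/
def canU (t : UBT) : List Bool := ((loU t false).drop 1).dropLast

/-- A pair of twin binary trees: same number of nodes and complementary canopies. -/
def IsTwin (J : UBT × UBT) : Prop :=
  sizeU J.1 = sizeU J.2 ∧ (canU J.1).length = (canU J.2).length ∧
    ∀ i < (canU J.1).length, (canU J.1).getD i false ≠ (canU J.2).getD i false

/-- `σ` is (the word of) a permutation of `{1, …, n}`. -/
def IsPerm (n : ℕ) (σ : List ℕ) : Prop := σ.Perm (List.range' 1 n)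

/-- Covering-type step of the right permutohedron (weak) order: exchange of two
adjacent letters `a < b`. -/
def PermutoStep (σ ν : List ℕ) : Prop :=
  ∃ (p s : List ℕ) (a b : ℕ), a < b ∧ σ = p ++ a :: b :: s ∧ ν = p ++ b :: a :: s

/-- The right permutohedron (weak) order. -/
def PermutoLe : List ℕ → List ℕ → Prop := Relation.ReflTransGen PermutoStep

/-- Baxter permutations: avoiding the generalized patterns 2-41-3 and 3-14-2. -/
def IsBaxterPerm (σ : List ℕ) : Prop :=
  ∀ i j k, i < j → j + 1 < k → k < σ.length →
    ¬(σ.getD (j+1) 0 < σ.getD i 0 ∧ σ.getD i 0 < σ.getD k 0 ∧ σ.getD k 0 < σ.getD j 0) ∧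
    ¬(σ.getD j 0 < σ.getD k 0 ∧ σ.getD k 0 < σ.getD i 0 ∧ σ.getD i 0 < σ.getD (j+1) 0)

/-- The free quasi-symmetric functions, modeled as finitely supported functions
on words (the fundamental basis element `F_σ` is `Finsupp.single σ 1`). -/
abbrev FQSym := List ℕ →₀ ℚ

/-- Model for `FQSym ⊗ FQSym`. -/
abbrev FQSym2 := (List ℕ × List ℕ) →₀ ℚ

/-- The list of shuffles of two words. -/
def shuffles : List ℕ → List ℕ → List (List ℕ)
  | [], v => [v]
  | u, [] => [u]
  | a :: u, b :: v =>
      (shuffles u (b :: v)).map (a :: ·) ++ (shuffles (a :: u) v).map (b :: ·)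
termination_by u v => u.length + v.length
decreasing_by all_goals (simp; try omega)

/-- The shifted shuffle of two permutations. -/
def shShuffles (σ ν : List ℕ) : List (List ℕ) := shuffles σ (ν.map (· + σ.length))

/-- The product of FQSym on the fundamental basis: shifted shuffle. -/
noncomputable def fqMul (x y : FQSym) : FQSym :=
  x.sum fun σ a => y.sum fun ν b =>
    ((shShuffles σ ν).map fun π => Finsupp.single π (a * b)).sum

/-- The coproduct of FQSym: deconcatenation followed by standardization. -/
noncomputable def fqCoprod (x : FQSym) : FQSym2 :=
  x.sum fun σ a =>
    ((List.range (σ.length + 1)).map fun i =>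
      Finsupp.single (std (σ.take i), std (σ.drop i)) a).sum

/-- The tensor product of two elements of FQSym, in the model `FQSym2`. -/
noncomputable def fqTensor (x y : FQSym) : FQSym2 :=
  x.sum fun σ a => y.sum fun ν b => Finsupp.single (σ, ν) (a * b)

/-- All permutations of `{1, …, n}` as words. -/
def permsOf (n : ℕ) : List (List ℕ) := (List.range' 1 n).permutations

/-- The basis element `P_J` of Baxter: the sum of `F_σ` over the permutations
of size `n` whose P-symbol has shape `J`. -/
noncomputable def PJ (n : ℕ) (J : UBT × UBT) : FQSym :=
  (((permsOf n).filter fun σ => decide (Pshape σ = J)).map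
    fun σ => Finsupp.single σ (1 : ℚ)).sum

/-- The span of the elements `P_J`. -/
noncomputable def BaxterSpan : Submodule ℚ FQSym :=
  Submodule.span ℚ {x : FQSym | ∃ n J, x = PJ n J}

/-- The span of the tensors `P_J ⊗ P_{J'}`. -/
noncomputable def BaxterSpan2 : Submodule ℚ FQSym2 :=
  Submodule.span ℚ {z : FQSym2 | ∃ n J m J', z = fqTensor (PJ n J) (PJ m J')}

/-!
On words without repeated letters `insR u` is `insL` of the mirror image of `u`, so the statistic
`Pshape` is the pair formed by the shape of the binary search tree of a word and that of its mirror
image. The quicksort recursion for `insL` shows that this shape is compatible with order preserving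
relabeling, with restriction to an interval of letters and with concatenation; compatibility passes
to mirror images and to pairs.

For any compatible statistic `f`, the class sums `∑_{f σ = c} F_σ` span a Hopf subalgebra. A
permutation of size `n + m` occurs in a product of two class sums exactly when the classes of its
restrictions to `[1, n]` and `[n + 1, n + m]` are the prescribed ones, which only depends on its
class. Dually, a coproduct of a class sum splits according to the set of letters of the left factor,
and for each such set the pairs `(u, v)` with `u ++ v` in a given class form a union of products of
two classes.
-/

/-! ### Binary search trees of words -/

theorem foldl_leafInsL_node (l r : BT) (b : ℕ) (u : List ℕ) :
    u.foldl leafInsL (.node l b r) =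
      .node ((u.filter (· < b)).foldl leafInsL l) b ((u.filter (b ≤ ·)).foldl leafInsL r) := by
  induction u generalizing l r with
  | nil => rfl
  | cons a u ih =>
    rcases lt_or_ge a b with hab | hab
    · simp [leafInsL, ih, hab]
    · simp [leafInsL, ih, hab, not_lt.2 hab]

theorem insL_cons (a : ℕ) (u : List ℕ) :
    insL (a :: u) = .node (insL (u.filter (· < a))) a (insL (u.filter (a ≤ ·))) :=
  foldl_leafInsL_node .leaf .leaf a u

/-- The recursion scheme of quicksort, which is that of `insL_cons`. -/
@[elab_as_elim]
theorem pivotInduction {α : Type*} [LT α] [LE α] [DecidableLT α] [DecidableLE α]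
    {motive : List α → Prop} (nil : motive [])
    (cons : ∀ a u, motive (u.filter (· < a)) → motive (u.filter (a ≤ ·)) → motive (a :: u))
    (u : List α) : motive u := by
  induction h : u.length using Nat.strong_induction_on generalizing u with
  | _ n ih =>
    subst h
    cases u with
    | nil => exact nil
    | cons a u =>
      exact cons a u (ih _ (Nat.lt_succ_of_le (List.length_filter_le _ _)) _ rfl)
        (ih _ (Nat.lt_succ_of_le (List.length_filter_le _ _)) _ rfl)

/-- The in-order reading of a labeled binary tree. -/
def BT.inorder : BT → List ℕ
  | .leaf => []
  | .node l b r => l.inorder ++ b :: r.inorder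

theorem BT.length_inorder (t : BT) : t.inorder.length = sizeU (shape t) := by
  induction t with
  | leaf => rfl
  | node l b r ihl ihr => simp [inorder, shape, sizeU, ihl, ihr, add_assoc]

theorem BT.eq_of_shape_eq_of_inorder_eq {t t' : BT} (hs : shape t = shape t')
    (hi : t.inorder = t'.inorder) : t = t' := by
  induction t generalizing t' with
  | leaf => cases t' with
    | leaf => rfl
    | node => simp [shape] at hs
  | node l b r ihl ihr => cases t' with
    | leaf => simp [shape] at hs
    | node l' b' r' =>
      simp only [shape, UBT.node.injEq] at hs
      obtain ⟨hl, hbr⟩ := List.append_inj hi (by rw [length_inorder, length_inorder, hs.1])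
      obtain ⟨rfl, hr⟩ := List.cons.inj hbr
      rw [ihl hs.1 hl, ihr hs.2 hr]

theorem inorder_insL_perm (u : List ℕ) : (insL u).inorder.Perm u := by
  induction u using pivotInduction with
  | nil => rfl
  | cons a u ihl ihr =>
    rw [insL_cons]
    refine (ihl.append (ihr.cons a)).trans (List.perm_middle.trans (.cons a ?_))
    simpa [← decide_not] using List.filter_append_perm (fun x => decide (x < a)) u

theorem pairwise_le_inorder_insL (u : List ℕ) : (insL u).inorder.Pairwise (· ≤ ·) := by
  induction u using pivotInduction with
  | nil => exact .nil
  | cons a u ihl ihr =>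
    have hl : ∀ x ∈ (insL (u.filter (· < a))).inorder, x < a := fun x hx => by
      simpa using List.of_mem_filter ((inorder_insL_perm _).mem_iff.1 hx)
    have hr : ∀ x ∈ (insL (u.filter (a ≤ ·))).inorder, a ≤ x := fun x hx => by
      simpa using List.of_mem_filter ((inorder_insL_perm _).mem_iff.1 hx)
    rw [insL_cons, BT.inorder, List.pairwise_append, List.pairwise_cons]
    refine ⟨ihl, ⟨hr, ihr⟩, fun x hx y hy => ?_⟩
    rcases List.mem_cons.1 hy with rfl | hy
    · exact (hl x hx).le
    · exact (hl x hx).le.trans (hr y hy)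

theorem insL_eq_of_perm_of_shape_eq {u v : List ℕ} (h : u.Perm v)
    (hs : shape (insL u) = shape (insL v)) : insL u = insL v :=
  BT.eq_of_shape_eq_of_inorder_eq hs <|
    ((inorder_insL_perm u).trans (h.trans (inorder_insL_perm v).symm)).eq_of_pairwise'
      (pairwise_le_inorder_insL u) (pairwise_le_inorder_insL v)

theorem shape_insL_map {u : List ℕ} {g : ℕ → ℕ} (hg : StrictMonoOn g {x | x ∈ u}) :
    shape (insL (u.map g)) = shape (insL u) := by
  induction u using pivotInduction with
  | nil => rfl
  | cons a u ihl ihr =>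
    have filter_lt : (u.map g).filter (· < g a) = (u.filter (· < a)).map g := by
      rw [List.filter_map]
      exact congrArg _ (List.filter_congr fun x hx => by
        simp [hg.lt_iff_lt (List.mem_cons_of_mem a hx) List.mem_cons_self])
    have filter_ge : (u.map g).filter (g a ≤ ·) = (u.filter (a ≤ ·)).map g := by
      rw [List.filter_map]
      exact congrArg _ (List.filter_congr fun x hx => by
        simp [hg.le_iff_le List.mem_cons_self (List.mem_cons_of_mem a hx)])
    have filter_subset (p : ℕ → Bool) : {x | x ∈ u.filter p} ⊆ {x | x ∈ a :: u} :=
      fun x hx => List.mem_cons_of_mem a (List.mem_of_mem_filter hx)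
    rw [List.map_cons, insL_cons, insL_cons, filter_lt, filter_ge, shape, shape,
      ihl (hg.mono (filter_subset _)), ihr (hg.mono (filter_subset _))]

theorem insL_eq_leaf_iff {u : List ℕ} : insL u = .leaf ↔ u = [] := by
  cases u with
  | nil => simp [insL]
  | cons a u => simp [insL_cons]

theorem forall_lt_or_forall_le_of_ordConnected {α : Type*} [LinearOrder α] {s : Set α}
    (hs : s.OrdConnected) {a : α} (ha : a ∉ s) : (∀ x ∈ s, x < a) ∨ ∀ x ∈ s, a ≤ x := by
  by_contra! h
  obtain ⟨⟨y, hy, hay⟩, x, hx, hxa⟩ := h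
  exact ha (hs.out hx hy ⟨hxa.le, hay⟩)

theorem insL_filter_congr {p : ℕ → Bool} (hp : {x | p x}.OrdConnected) {u v : List ℕ}
    (h : insL u = insL v) : insL (u.filter p) = insL (v.filter p) := by
  induction u using pivotInduction generalizing v with
  | nil => rw [insL_eq_leaf_iff.1 h.symm]
  | cons a u ihl ihr =>
    cases v with
    | nil => exact absurd (insL_eq_leaf_iff.1 h) (List.cons_ne_nil a u)
    | cons b v =>
      rw [insL_cons, insL_cons, BT.node.injEq] at h
      obtain ⟨hl, rfl, hr⟩ := h
      specialize ihl hl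
      specialize ihr hr
      by_cases ha : p a
      · rw [List.filter_cons_of_pos ha, List.filter_cons_of_pos ha, insL_cons, insL_cons]
        simp only [List.filter_comm p] at ihl ihr
        rw [ihl, ihr]
      · rw [List.filter_cons_of_neg ha, List.filter_cons_of_neg ha]
        have absorb {q : ℕ → Bool} (hq : ∀ x, p x → q x) (w : List ℕ) :
            (w.filter q).filter p = w.filter p := by
          rw [List.filter_filter]
          exact List.filter_congr fun x _ => by simpa using hq x
        rcases forall_lt_or_forall_le_of_ordConnected hp ha with hlt | hge
        · rwa [absorb (by simpa using hlt), absorb (by simpa using hlt)] at ihl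
        · rwa [absorb (by simpa using hge), absorb (by simpa using hge)] at ihr

theorem foldl_leafInsL_congr (t : BT) {u v : List ℕ} (h : insL u = insL v) :
    u.foldl leafInsL t = v.foldl leafInsL t := by
  induction t generalizing u v with
  | leaf => exact h
  | node l b r ihl ihr =>
    have hlt : {x | decide (x < b)}.OrdConnected := by
      simp only [decide_eq_true_eq]
      exact Set.ordConnected_Iio
    have hge : {x | decide (b ≤ x)}.OrdConnected := by
      simp only [decide_eq_true_eq]
      exact Set.ordConnected_Ici
    rw [foldl_leafInsL_node, foldl_leafInsL_node, ihl (insL_filter_congr hlt h),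
      ihr (insL_filter_congr hge h)]

theorem insL_append_congr {u u' v v' : List ℕ} (hu : insL u = insL u') (hv : insL v = insL v') :
    insL (u ++ v) = insL (u' ++ v') := by
  rw [insL, insL, List.foldl_append, List.foldl_append]
  exact (foldl_leafInsL_congr _ hv).trans (congrArg (v'.foldl leafInsL) hu)

theorem splitLE_insL (u : List ℕ) (a : ℕ) : splitLE (insL u) a = insL (u.filter (· ≤ a)) := by
  induction u using pivotInduction with
  | nil => rfl
  | cons b u ihl ihr =>
    rw [insL_cons, splitLE]
    split_ifs with hb
    · rw [ihr, List.filter_cons_of_pos (by simpa using hb), insL_cons]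
      simp only [List.filter_filter]
      congr 2 <;> exact List.filter_congr fun x _ => by grind
    · rw [ihl, List.filter_cons_of_neg (by simpa using hb), List.filter_filter]
      exact congrArg insL (List.filter_congr fun x _ => by grind)

theorem splitGT_insL (u : List ℕ) (a : ℕ) : splitGT (insL u) a = insL (u.filter (a < ·)) := by
  induction u using pivotInduction with
  | nil => rfl
  | cons b u ihl ihr =>
    rw [insL_cons, splitGT]
    split_ifs with hb
    · rw [ihr, List.filter_cons_of_neg (by simpa using hb), List.filter_filter]
      exact congrArg insL (List.filter_congr fun x _ => by grind)
    · rw [ihl, List.filter_cons_of_pos (by simpa using hb), insL_cons]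
      simp only [List.filter_filter]
      congr 2 <;> exact List.filter_congr fun x _ => by grind

theorem rootIns_insL {u : List ℕ} {a : ℕ} (ha : a ∉ u) : rootIns (insL u) a = insL (a :: u) := by
  rw [rootIns, splitLE_insL, splitGT_insL, insL_cons]
  have ne_of_mem : ∀ x ∈ u, x ≠ a := fun x hx hxa => ha (hxa ▸ hx)
  congr 2 <;> exact List.filter_congr fun x hx => by grind

theorem insR_eq_insL_reverse {u : List ℕ} (hu : u.Nodup) : insR u = insL u.reverse := by
  induction u using List.reverseRecOn with
  | nil => rfl
  | append_singleton u a ih =>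
    obtain ⟨hau, hu⟩ := List.nodup_cons.1 (List.nodup_append_comm.1 hu)
    rw [insR, List.foldl_concat, ← insR, ih hu, rootIns_insL (by simpa using hau),
      List.reverse_append, List.reverse_singleton, List.singleton_append]

/-! ### Compatible statistics -/

/-- A statistic `f` on words without repeated letters whose level sets, among the words with given
letters, are the classes of a congruence (`append_congr`) compatible with restriction to intervals
of the alphabet (`filter_congr`) and with destandardization (`map_eq`: only the relative order of
the letters matters). -/
structure IsFQSymCompatible {α : Type*} (f : List ℕ → α) : Prop where
  map_eq : ∀ {u : List ℕ} {g : ℕ → ℕ}, u.Nodup → StrictMonoOn g {x | x ∈ u} → f (u.map g) = f u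
  filter_congr : ∀ {u v : List ℕ} {p : ℕ → Bool}, {x | p x}.OrdConnected → u.Nodup → u.Perm v →
    f u = f v → f (u.filter p) = f (v.filter p)
  append_congr : ∀ {u u' v v' : List ℕ}, (u ++ v).Nodup → u.Perm u' → v.Perm v' → f u = f u' →
    f v = f v' → f (u ++ v) = f (u' ++ v')

namespace IsFQSymCompatible

variable {α β : Type*} {f : List ℕ → α}

theorem prodMk {g : List ℕ → β} (hf : IsFQSymCompatible f) (hg : IsFQSymCompatible g) :
    IsFQSymCompatible fun u => (f u, g u) where
  map_eq hu hφ := Prod.ext (hf.map_eq hu hφ) (hg.map_eq hu hφ)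
  filter_congr hp hu h e := by
    rw [Prod.mk.injEq] at e ⊢
    exact ⟨hf.filter_congr hp hu h e.1, hg.filter_congr hp hu h e.2⟩
  append_congr hu h k e e' := by
    rw [Prod.mk.injEq] at e e' ⊢
    exact ⟨hf.append_congr hu h k e.1 e'.1, hg.append_congr hu h k e.2 e'.2⟩

theorem comp_reverse (hf : IsFQSymCompatible f) : IsFQSymCompatible fun u => f u.reverse where
  map_eq hu hφ := by
    rw [← List.map_reverse]
    exact hf.map_eq (List.nodup_reverse.2 hu) (by simpa only [List.mem_reverse] using hφ)
  filter_congr {u v p} hp hu h e := by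
    rw [← List.filter_reverse, ← List.filter_reverse]
    exact hf.filter_congr hp (List.nodup_reverse.2 hu)
      ((List.reverse_perm u).trans (h.trans (List.reverse_perm v).symm)) e
  append_congr {u u' v v'} hu h k e e' := by
    rw [List.reverse_append, List.reverse_append]
    refine hf.append_congr ?_ ((List.reverse_perm v).trans (k.trans (List.reverse_perm v').symm))
      ((List.reverse_perm u).trans (h.trans (List.reverse_perm u').symm)) e' e
    rw [← List.reverse_append]
    exact List.nodup_reverse.2 hu

theorem congr {g : List ℕ → α} (hf : IsFQSymCompatible f) (h : ∀ u, u.Nodup → g u = f u) :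
    IsFQSymCompatible g where
  map_eq {u φ} hu hφ := by
    rw [h _ (hu.map_on fun x hx y hy => hφ.injOn hx hy), h u hu, hf.map_eq hu hφ]
  filter_congr {u v p} hp hu huv e := by
    have hv := huv.nodup_iff.1 hu
    rw [h u hu, h v hv] at e
    rw [h _ (hu.filter p), h _ (hv.filter p), hf.filter_congr hp hu huv e]
  append_congr {u u' v v'} huv hu hv e e' := by
    have huv' := (hu.append hv).nodup_iff.1 huv
    rw [h u huv.of_append_left, h u' huv'.of_append_left] at e
    rw [h v huv.of_append_right, h v' huv'.of_append_right] at e'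
    rw [h _ huv, h _ huv', hf.append_congr huv hu hv e e']

end IsFQSymCompatible

theorem isFQSymCompatible_shape_insL : IsFQSymCompatible fun u => shape (insL u) where
  map_eq _ hg := shape_insL_map hg
  filter_congr hp _ h e :=
    congrArg shape (insL_filter_congr hp (insL_eq_of_perm_of_shape_eq h e))
  append_congr _ hu hv e e' :=
    congrArg shape (insL_append_congr (insL_eq_of_perm_of_shape_eq hu e)
      (insL_eq_of_perm_of_shape_eq hv e'))

theorem isFQSymCompatible_Pshape : IsFQSymCompatible Pshape :=
  (isFQSymCompatible_shape_insL.prodMk isFQSymCompatible_shape_insL.comp_reverse).congr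
    fun u hu => by rw [Pshape, insR_eq_insL_reverse hu]

/-! ### Words on a given set of letters -/

/-- The words in which every letter of `A` occurs exactly once and no other letter occurs. For
`A = {1, …, n}` these are the permutations of size `n`. -/
def wordsOn {α : Type*} (A : Finset α) : Finset (List α) :=
  ⟨A.val.lists, Multiset.lists_nodup_finset A⟩

section wordsOn

variable {α β : Type*} {A B : Finset α} {u v w : List α}

theorem mem_wordsOn_iff_coe_eq_val : w ∈ wordsOn A ↔ (w : Multiset α) = A.val :=
  (Multiset.mem_lists_iff A.val w).trans eq_comm

theorem mem_wordsOn : w ∈ wordsOn A ↔ w.Nodup ∧ ∀ x, x ∈ w ↔ x ∈ A := by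
  rw [mem_wordsOn_iff_coe_eq_val]
  constructor
  · intro h
    exact ⟨Multiset.coe_nodup.1 (h ▸ A.nodup), fun x => by
      rw [← Multiset.mem_coe, h, Finset.mem_val]⟩
  · rintro ⟨hw, hmem⟩
    exact (Multiset.Nodup.ext (Multiset.coe_nodup.2 hw) A.nodup).2 hmem

theorem length_of_mem_wordsOn (hw : w ∈ wordsOn A) : w.length = A.card := by
  rw [← Multiset.coe_card, mem_wordsOn_iff_coe_eq_val.1 hw, Finset.card_val]

theorem perm_of_mem_wordsOn (hu : u ∈ wordsOn A) (hv : v ∈ wordsOn A) : u.Perm v := by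
  rw [mem_wordsOn_iff_coe_eq_val] at hu hv
  exact Multiset.coe_eq_coe.1 (hu.trans hv.symm)

theorem filter_mem_wordsOn_and_iff (p : α → Bool) :
    w.filter p ∈ wordsOn (A.filter fun x => p x) ∧
      w.filter (!p ·) ∈ wordsOn (A.filter fun x => !p x) ↔ w ∈ wordsOn A := by
  simp only [mem_wordsOn, List.mem_filter, Finset.mem_filter]
  constructor
  · rintro ⟨⟨hp, hmem⟩, hnp, hmem'⟩
    have hperm := List.filter_append_perm p w
    refine ⟨hperm.nodup_iff.1 (hp.append hnp (by grind [List.Disjoint])), fun x => ?_⟩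
    specialize hmem x
    specialize hmem' x
    grind
  · rintro ⟨hw, hmem⟩
    exact ⟨⟨hw.filter _, by simp [hmem]⟩, hw.filter _, by simp [hmem]⟩

theorem injOn_list_map {s : Set α} {g : α → β} (hg : s.InjOn g) :
    {w : List α | ∀ x ∈ w, x ∈ s}.InjOn (List.map g) := by
  intro u hu v hv h
  induction u generalizing v with
  | nil => simpa [eq_comm] using h
  | cons a u ih => cases v <;> grind [Set.InjOn]

theorem wordsOn_image [DecidableEq β] {g : α → β} (hg : Set.InjOn g A) :
    wordsOn (A.image g) = (wordsOn A).image (List.map g) := by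
  ext w
  rw [Finset.mem_image, mem_wordsOn_iff_coe_eq_val, Finset.image_val_of_injOn hg, ← A.coe_toList,
    Multiset.map_coe, Multiset.coe_eq_coe]
  refine (iff_of_eq (congrFun₂ (List.eq_map_comp_perm g) w A.toList)).symm.trans ?_
  simp only [Relation.Comp, mem_wordsOn_iff_coe_eq_val, ← A.coe_toList, Multiset.coe_eq_coe,
    and_comm, eq_comm]

variable [DecidableEq α]

theorem mem_wordsOn_toFinset (hw : w.Nodup) : w ∈ wordsOn w.toFinset :=
  mem_wordsOn.2 ⟨hw, fun _ => List.mem_toFinset.symm⟩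

theorem toFinset_of_mem_wordsOn (hw : w ∈ wordsOn A) : w.toFinset = A := by
  ext x
  rw [List.mem_toFinset, (mem_wordsOn.1 hw).2]

theorem append_mem_wordsOn (hAB : Disjoint A B) (hu : u ∈ wordsOn A) (hv : v ∈ wordsOn B) :
    u ++ v ∈ wordsOn (A ∪ B) := by
  rw [mem_wordsOn_iff_coe_eq_val] at *
  rw [← Finset.disjUnion_eq_union A B hAB, Finset.disjUnion_val, ← hu, ← hv, Multiset.coe_add]

theorem drop_mem_wordsOn (hw : w ∈ wordsOn A) (i : ℕ) :
    w.drop i ∈ wordsOn (A \ (w.take i).toFinset) := by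
  have hnodup := (mem_wordsOn.1 hw).1
  refine mem_wordsOn.2 ⟨hnodup.sublist (List.drop_sublist i w), fun x => ?_⟩
  rw [Finset.mem_sdiff, ← (mem_wordsOn.1 hw).2, List.mem_toFinset]
  rw [← List.take_append_drop i w] at hnodup
  have mem_iff : x ∈ w ↔ x ∈ w.take i ∨ x ∈ w.drop i := by
    rw [← List.mem_append, List.take_append_drop]
  have := List.disjoint_of_nodup_append hnodup
  grind [List.Disjoint]

theorem sum_wordsOn_take_drop {M : Type*} [AddCommMonoid M] {i : ℕ} (hi : i ≤ A.card)
    (h : List α → List α → M) :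
    ∑ w ∈ wordsOn A, h (w.take i) (w.drop i) =
      ∑ B ∈ A.powersetCard i, ∑ z ∈ wordsOn B ×ˢ wordsOn (A \ B), h z.1 z.2 := by
  have take_mem {w : List α} (hw : w ∈ wordsOn A) : w.take i ∈ wordsOn (w.take i).toFinset :=
    mem_wordsOn_toFinset ((mem_wordsOn.1 hw).1.sublist (List.take_sublist i w))
  have maps_to : ∀ w ∈ wordsOn A, (w.take i).toFinset ∈ A.powersetCard i := fun w hw => by
    refine Finset.mem_powersetCard.2 ⟨fun x hx => ?_, ?_⟩
    · exact ((mem_wordsOn.1 hw).2 x).1 (List.mem_of_mem_take (List.mem_toFinset.1 hx))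
    · rw [← length_of_mem_wordsOn (take_mem hw), List.length_take, length_of_mem_wordsOn hw,
        min_eq_left hi]
  rw [← Finset.sum_fiberwise_of_maps_to maps_to]
  refine Finset.sum_congr rfl fun B hB => ?_
  obtain ⟨hBA, hBi⟩ := Finset.mem_powersetCard.1 hB
  refine Finset.sum_nbij' (fun w => (w.take i, w.drop i)) (fun z => z.1 ++ z.2)
    ?_ ?_ ?_ ?_ fun _ _ => rfl
  · intro w hw
    obtain ⟨hwA, rfl⟩ := Finset.mem_filter.1 hw
    exact Finset.mem_product.2 ⟨take_mem hwA, drop_mem_wordsOn hwA i⟩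
  · rintro ⟨u, v⟩ hz
    obtain ⟨hu, hv⟩ := Finset.mem_product.1 hz
    have huv := append_mem_wordsOn Finset.disjoint_sdiff hu hv
    rw [Finset.union_sdiff_of_subset hBA] at huv
    rw [Finset.mem_filter, ← hBi, ← length_of_mem_wordsOn hu, List.take_left]
    exact ⟨huv, toFinset_of_mem_wordsOn hu⟩
  · exact fun w _ => List.take_append_drop i w
  · rintro ⟨u, v⟩ hz
    have hu := length_of_mem_wordsOn (Finset.mem_product.1 hz).1
    simp [← hBi, ← hu]

end wordsOn

/-! ### Shuffles -/

theorem mem_shuffles_iff {p : ℕ → Bool} {u v w : List ℕ} (hu : ∀ x ∈ u, p x)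
    (hv : ∀ x ∈ v, ¬p x) : w ∈ shuffles u v ↔ w.filter p = u ∧ w.filter (!p ·) = v := by
  fun_induction shuffles u v generalizing w with
  | case1 v =>
    rw [List.mem_singleton]
    constructor
    · rintro rfl
      exact ⟨by simpa using hv, by simpa using hv⟩
    · rintro ⟨hw, rfl⟩
      exact (List.filter_eq_self.2 (by simpa using hw)).symm
  | case2 u =>
    rw [List.mem_singleton]
    constructor
    · rintro rfl
      exact ⟨by simpa using hu, by simpa using hu⟩
    · rintro ⟨rfl, hw⟩
      exact (List.filter_eq_self.2 (by simpa using hw)).symm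
  | case3 a u b v ihu ihv =>
    have ha : p a := hu a List.mem_cons_self
    have hb : ¬p b := hv b List.mem_cons_self
    cases w with
    | nil => simp
    | cons x w =>
      have hw := ihu (w := w) (List.forall_mem_of_forall_mem_cons hu) hv
      have hw' := ihv (w := w) hu (List.forall_mem_of_forall_mem_cons hv)
      by_cases hx : p x
      · have hbx : b ≠ x := fun h => hb (h ▸ hx)
        simp [hw, hx, hbx, and_assoc, and_comm, eq_comm]
      · have hax : a ≠ x := fun h => hx (h ▸ ha)
        simp [hw', hx, hax, and_assoc, and_comm, and_left_comm, eq_comm]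

theorem nodup_shuffles {u v : List ℕ} (huv : u.Disjoint v) : (shuffles u v).Nodup := by
  fun_induction shuffles u v with
  | case1 v => exact List.nodup_singleton v
  | case2 u => exact List.nodup_singleton u
  | case3 a u b v ihu ihv =>
    refine .append ((ihu ?_).map List.cons_injective) ((ihv ?_).map List.cons_injective) ?_
    · exact (List.disjoint_cons_left.1 huv).2
    · exact (List.disjoint_cons_right.1 huv).2
    · intro w hw hw'
      obtain ⟨w₁, -, rfl⟩ := List.mem_map.1 hw
      obtain ⟨w₂, -, h⟩ := List.mem_map.1 hw'
      exact huv List.mem_cons_self ((List.cons.inj h).1 ▸ List.mem_cons_self)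

theorem sum_wordsOn_sum_shuffles {M : Type*} [AddCommMonoid M] (S : Finset ℕ) (p : ℕ → Bool)
    (P Q : List ℕ → Prop) (g : List ℕ → M) :
    ∑ u ∈ wordsOn (S.filter fun x => p x) with P u,
        ∑ v ∈ wordsOn (S.filter fun x => !p x) with Q v, ((shuffles u v).map g).sum =
      ∑ w ∈ wordsOn S with P (w.filter p) ∧ Q (w.filter (!p ·)), g w := by
  have maps_to : ∀ w ∈ (wordsOn S).filter fun w => P (w.filter p) ∧ Q (w.filter (!p ·)),
      (w.filter p, w.filter (!p ·)) ∈ ((wordsOn (S.filter fun x => p x)).filter P) ×ˢ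
        ((wordsOn (S.filter fun x => !p x)).filter Q) := fun w hw => by
    obtain ⟨hw, hP, hQ⟩ := Finset.mem_filter.1 hw
    obtain ⟨hu, hv⟩ := (filter_mem_wordsOn_and_iff p).2 hw
    exact Finset.mem_product.2 ⟨Finset.mem_filter.2 ⟨hu, hP⟩, Finset.mem_filter.2 ⟨hv, hQ⟩⟩
  rw [← Finset.sum_product', ← Finset.sum_fiberwise_of_maps_to maps_to]
  refine Finset.sum_congr rfl ?_
  rintro ⟨u, v⟩ huv
  obtain ⟨⟨hu, hP⟩, hv, hQ⟩ := by simpa only [Finset.mem_product, Finset.mem_filter] using huv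
  have hpu : ∀ x ∈ u, p x := fun x hx => (Finset.mem_filter.1 (((mem_wordsOn.1 hu).2 x).1 hx)).2
  have hpv : ∀ x ∈ v, ¬p x := fun x hx => by
    simpa using (Finset.mem_filter.1 (((mem_wordsOn.1 hv).2 x).1 hx)).2
  rw [← List.sum_toFinset g (nodup_shuffles fun x hx hx' => hpv x hx' (hpu x hx))]
  refine Finset.sum_congr (Finset.ext fun w => ?_) fun _ _ => rfl
  rw [List.mem_toFinset, mem_shuffles_iff hpu hpv, Finset.mem_filter, Finset.mem_filter,
    Prod.mk.injEq]
  constructor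
  · rintro ⟨rfl, rfl⟩
    exact ⟨⟨(filter_mem_wordsOn_and_iff p).1 ⟨hu, hv⟩, hP, hQ⟩, rfl, rfl⟩
  · exact And.right

/-! ### Standardization -/

theorem IsFQSymCompatible.sum_wordsOn_image {α M : Type*} [AddCommMonoid M] {f : List ℕ → α}
    (hf : IsFQSymCompatible f) {A : Finset ℕ} {g : ℕ → ℕ} (hg : StrictMonoOn g A) (c : α)
    (h : List ℕ → M) :
    ∑ w ∈ wordsOn (A.image g) with f w = c, h w =
      ∑ w ∈ wordsOn A with f w = c, h (w.map g) := by
  have map_injOn : Set.InjOn (List.map g) (wordsOn A) :=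
    (injOn_list_map hg.injOn).mono fun w hw x hx => ((mem_wordsOn.1 hw).2 x).1 hx
  rw [wordsOn_image hg.injOn, Finset.sum_filter, Finset.sum_image map_injOn, Finset.sum_filter]
  refine Finset.sum_congr rfl fun w hw => ?_
  obtain ⟨hnodup, hmem⟩ := mem_wordsOn.1 hw
  rw [hf.map_eq hnodup (hg.mono fun x hx => (hmem x).1 hx)]

/-- The rank of the letter `x` in the alphabet `A`, counted from `1`: standardizing a word whose
set of letters is `A` applies this map to each letter. -/
def letterRank (A : Finset ℕ) (x : ℕ) : ℕ := (A.filter (· < x)).card + 1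

theorem strictMonoOn_letterRank (A : Finset ℕ) : StrictMonoOn (letterRank A) A := by
  intro x hx y _ hxy
  refine Nat.succ_lt_succ (Finset.card_lt_card (Finset.ssubset_iff_of_subset ?_ |>.2 ⟨x, ?_⟩))
  · exact Finset.monotone_filter_right A fun z _ hz => lt_trans hz hxy
  · simpa using ⟨hx, hxy⟩

theorem image_letterRank (A : Finset ℕ) : A.image (letterRank A) = Finset.Icc 1 A.card := by
  refine Finset.eq_of_subset_of_card_le (Finset.image_subset_iff.2 fun x hx => ?_) ?_
  · refine Finset.mem_Icc.2 ⟨Nat.succ_pos _, Finset.card_lt_card ?_⟩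
    exact Finset.filter_ssubset.2 ⟨x, hx, lt_irrefl x⟩
  · rw [Finset.card_image_of_injOn (strictMonoOn_letterRank A).injOn, Nat.card_Icc,
      Nat.add_sub_cancel]

theorem length_filter_eq_length_filter_range {α : Type*} (u : List α) (d : α) (p : α → Bool) :
    (u.filter p).length = ((List.range u.length).filter fun j => p (u.getD j d)).length := by
  have hu : (List.range u.length).map (u.getD · d) = u :=
    List.ext_getElem (by simp) fun i h _ => by simp_all
  conv_lhs => rw [← hu, List.filter_map, List.length_map]
  rfl

theorem std_eq_map_letterRank {A : Finset ℕ} {u : List ℕ} (hu : u ∈ wordsOn A) :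
    std u = u.map (letterRank A) := by
  have hnodup := (mem_wordsOn.1 hu).1
  have letterRank_eq (x : ℕ) : letterRank A x = (u.filter (· < x)).length + 1 := by
    rw [← List.toFinset_card_of_nodup (hnodup.filter _), List.toFinset_filter,
      toFinset_of_mem_wordsOn hu]
    simp [letterRank]
  refine List.ext_getElem (by simp [std]) fun i hi _ => ?_
  replace hi : i < u.length := by simpa [std] using hi
  simp only [std, List.getElem_map, List.getElem_range, letterRank_eq, Nat.add_right_cancel_iff]
  rw [length_filter_eq_length_filter_range u 0]
  refine congrArg _ (List.filter_congr fun j hj => ?_)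
  rw [List.mem_range] at hj
  simp only [List.getD_eq_getElem, hi, hj, hnodup.getElem_inj_iff]
  grind

theorem IsFQSymCompatible.sum_wordsOn_std {α M : Type*} [AddCommMonoid M] {f : List ℕ → α}
    (hf : IsFQSymCompatible f) (A : Finset ℕ) (c : α) (h : List ℕ → M) :
    ∑ w ∈ wordsOn A with f w = c, h (std w) =
      ∑ w ∈ wordsOn (Finset.Icc 1 A.card) with f w = c, h w := by
  rw [← image_letterRank, hf.sum_wordsOn_image (strictMonoOn_letterRank A)]
  exact Finset.sum_congr rfl fun w hw => by
    rw [std_eq_map_letterRank (Finset.mem_filter.1 hw).1]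

/-! ### Products and coproducts of class sums -/

/-- The sum of the `F_σ` over the permutations `σ` of size `n` in the class `f σ = c`. -/
noncomputable def classSum {α : Type*} (f : List ℕ → α) (n : ℕ) (c : α) : FQSym :=
  ∑ σ ∈ wordsOn (Finset.Icc 1 n) with f σ = c, Finsupp.single σ 1

/-- The subspace of `FQSym` spanned by the class sums of `f`. -/
noncomputable def classSpan {α : Type*} (f : List ℕ → α) : Submodule ℚ FQSym :=
  Submodule.span ℚ {x | ∃ n c, x = classSum f n c}

/-- The subspace of `FQSym ⊗ FQSym` spanned by the tensor products of two class sums of `f`. -/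
noncomputable def classSpanTensor {α : Type*} (f : List ℕ → α) : Submodule ℚ FQSym2 :=
  Submodule.span ℚ {z | ∃ n c m d, z = fqTensor (classSum f n c) (classSum f m d)}

theorem PJ_eq_classSum (n : ℕ) (J : UBT × UBT) : PJ n J = classSum Pshape n J := by
  have mem_permsOf (σ : List ℕ) : σ ∈ permsOf n ↔ σ ∈ wordsOn (Finset.Icc 1 n) := by
    rw [permsOf, List.mem_permutations, mem_wordsOn]
    constructor
    · exact fun h => ⟨h.nodup_iff.2 List.nodup_range', fun x => by
        rw [h.mem_iff, List.mem_range'_1, Finset.mem_Icc]; omega⟩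
    · exact fun h => (List.perm_ext_iff_of_nodup h.1 List.nodup_range').2 fun x => by
        rw [h.2, List.mem_range'_1, Finset.mem_Icc]; omega
  have nodup_permsOf : (permsOf n).Nodup := List.nodup_permutations _ List.nodup_range'
  rw [PJ, classSum, ← List.sum_toFinset _ (nodup_permsOf.filter _)]
  exact Finset.sum_congr (Finset.ext fun σ => by simp [mem_permsOf]) fun _ _ => rfl

theorem classSum_mem_classSpan {α : Type*} (f : List ℕ → α) (n : ℕ) (c : α) :
    classSum f n c ∈ classSpan f :=
  Submodule.subset_span ⟨n, c, rfl⟩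

theorem fqTensor_classSum_mem_classSpanTensor {α : Type*} (f : List ℕ → α) (n m : ℕ) (c d : α) :
    fqTensor (classSum f n c) (classSum f m d) ∈ classSpanTensor f :=
  Submodule.subset_span ⟨n, c, m, d, rfl⟩

theorem sum_filter_mem_of_sum_fiber_mem {ι κ M N : Type*} [AddCommMonoid M] [SetLike N M]
    [AddSubmonoidClass N M] [DecidableEq κ] {S : N} {s : Finset ι} {k : ι → κ} {p : ι → Prop}
    [DecidablePred p] {g : ι → M} (hp : ∀ x ∈ s, ∀ y ∈ s, k x = k y → p x → p y)
    (hS : ∀ c, ∑ x ∈ s with k x = c, g x ∈ S) :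
    ∑ x ∈ s with p x, g x ∈ S := by
  rw [← Finset.sum_fiberwise_of_maps_to (g := k) (t := (s.filter p).image k)
    fun x hx => Finset.mem_image_of_mem k hx]
  refine sum_mem fun c hc => ?_
  obtain ⟨x, hx, rfl⟩ := Finset.mem_image.1 hc
  obtain ⟨hxs, hpx⟩ := Finset.mem_filter.1 hx
  convert hS (k x) using 2
  rw [Finset.filter_filter]
  exact Finset.filter_congr fun y hy =>
    ⟨And.right, fun hyx => ⟨hp x hxs y hy hyx.symm hpx, hyx⟩⟩

/-- The product of `FQSym` as a bilinear map. -/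
noncomputable def fqMulHom : FQSym →ₗ[ℚ] FQSym →ₗ[ℚ] FQSym :=
  Finsupp.linearCombination ℚ fun σ => Finsupp.linearCombination ℚ fun ν =>
    ((shShuffles σ ν).map fun π => Finsupp.single π 1).sum

/-- The coproduct of `FQSym` as a linear map. -/
noncomputable def fqCoprodHom : FQSym →ₗ[ℚ] FQSym2 :=
  Finsupp.linearCombination ℚ fun σ =>
    ((List.range (σ.length + 1)).map fun i => Finsupp.single (std (σ.take i), std (σ.drop i)) 1).sum

/-- The tensor product of elements of `FQSym` as a bilinear map. -/
noncomputable def fqTensorHom : FQSym →ₗ[ℚ] FQSym →ₗ[ℚ] FQSym2 :=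
  Finsupp.linearCombination ℚ fun σ => Finsupp.linearCombination ℚ fun ν => Finsupp.single (σ, ν) 1

theorem fqMulHom_apply (x y : FQSym) : fqMulHom x y = fqMul x y := by
  simp only [fqMulHom, fqMul, Finsupp.linearCombination_apply, Finsupp.sum, LinearMap.sum_apply,
    LinearMap.smul_apply, Finset.smul_sum, List.smul_sum, List.map_map]
  simp [Function.comp_def]

theorem fqCoprodHom_apply (x : FQSym) : fqCoprodHom x = fqCoprod x := by
  simp only [fqCoprodHom, fqCoprod, Finsupp.linearCombination_apply, Finsupp.sum, List.smul_sum,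
    List.map_map]
  simp [Function.comp_def]

theorem fqTensorHom_apply (x y : FQSym) : fqTensorHom x y = fqTensor x y := by
  simp [fqTensorHom, fqTensor, Finsupp.linearCombination_apply, Finsupp.sum, LinearMap.sum_apply,
    LinearMap.smul_apply, Finset.smul_sum]

theorem fqMulHom_single_single (σ ν : List ℕ) :
    fqMulHom (Finsupp.single σ 1) (Finsupp.single ν 1) =
      ((shuffles σ (ν.map (· + σ.length))).map fun π => Finsupp.single π 1).sum := by
  simp [fqMulHom, shShuffles]

theorem fqTensorHom_single_single (σ ν : List ℕ) :
    fqTensorHom (Finsupp.single σ 1) (Finsupp.single ν 1) = Finsupp.single (σ, ν) 1 := by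
  simp [fqTensorHom]

theorem fqCoprodHom_single (σ : List ℕ) :
    fqCoprodHom (Finsupp.single σ 1) = ∑ i ∈ Finset.range (σ.length + 1),
      Finsupp.single (std (σ.take i), std (σ.drop i)) 1 := by
  rw [fqCoprodHom, Finsupp.linearCombination_single, one_smul]
  rfl

theorem fqCoprod_classSum {α : Type*} (f : List ℕ → α) (n : ℕ) (c : α) :
    fqCoprod (classSum f n c) = ∑ i ∈ Finset.range (n + 1),
      ∑ A ∈ (Finset.Icc 1 n).powersetCard i,
        ∑ z ∈ wordsOn A ×ˢ wordsOn (Finset.Icc 1 n \ A) with f (z.1 ++ z.2) = c,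
          Finsupp.single (std z.1, std z.2) 1 := by
  have hcard : (Finset.Icc 1 n).card = n := by simp
  calc fqCoprod (classSum f n c)
      = ∑ w ∈ wordsOn (Finset.Icc 1 n) with f w = c, ∑ i ∈ Finset.range (n + 1),
          Finsupp.single (std (w.take i), std (w.drop i)) 1 := by
        rw [← fqCoprodHom_apply, classSum, map_sum]
        refine Finset.sum_congr rfl fun w hw => ?_
        rw [fqCoprodHom_single, length_of_mem_wordsOn (Finset.mem_filter.1 hw).1, hcard]
    _ = ∑ i ∈ Finset.range (n + 1), ∑ w ∈ wordsOn (Finset.Icc 1 n),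
          if f (w.take i ++ w.drop i) = c then
            Finsupp.single (std (w.take i), std (w.drop i)) 1 else 0 := by
        rw [Finset.sum_comm]
        simp only [List.take_append_drop, Finset.sum_filter]
    _ = _ := by
        refine Finset.sum_congr rfl fun i hi => ?_
        rw [sum_wordsOn_take_drop (hcard.symm ▸ Nat.lt_succ_iff.1 (Finset.mem_range.1 hi))
          fun u v => if f (u ++ v) = c then Finsupp.single (std u, std v) 1 else 0]
        simp only [Finset.sum_filter]

namespace IsFQSymCompatible

variable {α : Type*} {f : List ℕ → α}

theorem fqMul_classSum (hf : IsFQSymCompatible f) (n m : ℕ) (c d : α) :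
    fqMul (classSum f n c) (classSum f m d) =
      ∑ w ∈ wordsOn (Finset.Icc 1 (n + m)) with
          f (w.filter (· ≤ n)) = c ∧ f (w.filter fun x => !decide (x ≤ n)) = d,
        Finsupp.single w 1 := by
  have filter_le : (Finset.Icc 1 (n + m)).filter (fun x => decide (x ≤ n)) = Finset.Icc 1 n := by
    ext x
    simp only [Finset.mem_filter, Finset.mem_Icc, decide_eq_true_eq]
    omega
  have filter_not_le : (Finset.Icc 1 (n + m)).filter (fun x => !decide (x ≤ n)) =
      (Finset.Icc 1 m).image (· + n) := by
    ext x
    simp only [Finset.image_add_right_Icc, Finset.mem_filter, Finset.mem_Icc, Bool.not_eq_true',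
      decide_eq_false_iff_not]
    omega
  rw [← sum_wordsOn_sum_shuffles _ _ (f · = c) (f · = d), filter_le, filter_not_le]
  simp only [← fqMulHom_apply, classSum, map_sum, LinearMap.sum_apply]
  rw [Finset.sum_comm]
  refine Finset.sum_congr rfl fun u hu => ?_
  rw [hf.sum_wordsOn_image fun x _ y _ hxy => Nat.add_lt_add_right hxy n]
  refine Finset.sum_congr rfl fun v _ => ?_
  rw [fqMulHom_single_single, length_of_mem_wordsOn (Finset.mem_filter.1 hu).1, Nat.card_Icc,
    Nat.add_sub_cancel]

theorem fqMul_mem_classSpan (hf : IsFQSymCompatible f) {x y : FQSym} (hx : x ∈ classSpan f)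
    (hy : y ∈ classSpan f) : fqMul x y ∈ classSpan f := by
  rw [← fqMulHom_apply]
  refine LinearMap.BilinMap.apply_apply_mem_of_mem_span _ _ _ fqMulHom ?_ _ _ hx hy
  rintro _ ⟨n, c, rfl⟩ _ ⟨m, d, rfl⟩
  rw [fqMulHom_apply, hf.fqMul_classSum]
  refine sum_filter_mem_of_sum_fiber_mem (k := f) ?_
    (classSum_mem_classSpan f (n + m))
  have hle : {x | decide (x ≤ n)}.OrdConnected := by
    simp only [decide_eq_true_eq]
    exact Set.ordConnected_Iic
  have hgt : {x | !decide (x ≤ n)}.OrdConnected := by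
    simp only [Bool.not_eq_true', decide_eq_false_iff_not, not_le]
    exact Set.ordConnected_Ioi
  rintro v hv w hw hvw ⟨rfl, rfl⟩
  have hnodup := (mem_wordsOn.1 hv).1
  have hperm := perm_of_mem_wordsOn hv hw
  exact ⟨(hf.filter_congr hle hnodup hperm hvw).symm,
    (hf.filter_congr hgt hnodup hperm hvw).symm⟩

theorem fqTensor_classSum_card (hf : IsFQSymCompatible f) (A B : Finset ℕ) (c d : α) :
    fqTensor (classSum f A.card c) (classSum f B.card d) =
      ∑ z ∈ wordsOn A ×ˢ wordsOn B with (f z.1, f z.2) = (c, d),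
        Finsupp.single (std z.1, std z.2) 1 := by
  have filter_eq : ((wordsOn A ×ˢ wordsOn B).filter fun z => (f z.1, f z.2) = (c, d)) =
      (wordsOn A).filter (f · = c) ×ˢ (wordsOn B).filter (f · = d) := by
    ext z
    simp only [Finset.mem_filter, Finset.mem_product, Prod.mk.injEq]
    exact and_and_and_comm
  rw [filter_eq, Finset.sum_product, classSum, classSum, ← hf.sum_wordsOn_std A,
    ← hf.sum_wordsOn_std B, ← fqTensorHom_apply]
  simp only [map_sum, LinearMap.sum_apply, fqTensorHom_single_single]
  exact Finset.sum_comm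

theorem fqCoprod_mem_classSpanTensor (hf : IsFQSymCompatible f) {x : FQSym}
    (hx : x ∈ classSpan f) : fqCoprod x ∈ classSpanTensor f := by
  rw [← fqCoprodHom_apply]
  suffices classSpan f ≤ (classSpanTensor f).comap fqCoprodHom from this hx
  refine Submodule.span_le.2 ?_
  rintro _ ⟨n, c, rfl⟩
  rw [SetLike.mem_coe, Submodule.mem_comap, fqCoprodHom_apply, fqCoprod_classSum]
  refine sum_mem fun i _ => sum_mem fun A _ => ?_
  refine sum_filter_mem_of_sum_fiber_mem (k := fun z => (f z.1, f z.2)) ?_ fun ⟨d, e⟩ => ?_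
  · rintro ⟨u, v⟩ huv ⟨u', v'⟩ huv' h rfl
    obtain ⟨hu, hv⟩ := Finset.mem_product.1 huv
    obtain ⟨hu', hv'⟩ := Finset.mem_product.1 huv'
    obtain ⟨hfu, hfv⟩ := Prod.mk.inj h
    exact (hf.append_congr (mem_wordsOn.1 (append_mem_wordsOn Finset.disjoint_sdiff hu hv)).1
      (perm_of_mem_wordsOn hu hu') (perm_of_mem_wordsOn hv hv') hfu hfv).symm
  · rw [← hf.fqTensor_classSum_card]
    exact fqTensor_classSum_mem_classSpanTensor f _ _ d e

end IsFQSymCompatible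

/-- the family `{P_J}` spans a Hopf subalgebra of FQSym, i.e. its
span is closed under the product and the coproduct of FQSym. -/
theorem baxter_is_hopf_subalgebra :
    (∀ x ∈ BaxterSpan, ∀ y ∈ BaxterSpan, fqMul x y ∈ BaxterSpan) ∧
    (∀ x ∈ BaxterSpan, fqCoprod x ∈ BaxterSpan2) := by
  have span_eq : BaxterSpan = classSpan Pshape := by
    simp only [BaxterSpan, classSpan, PJ_eq_classSum]
  have span_tensor_eq : BaxterSpan2 = classSpanTensor Pshape := by
    simp only [BaxterSpan2, classSpanTensor, PJ_eq_classSum]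
  rw [span_eq, span_tensor_eq]
  exact ⟨fun _ hx _ hy => isFQSymCompatible_Pshape.fqMul_mem_classSpan hx hy,
    fun _ hx => isFQSymCompatible_Pshape.fqCoprod_mem_classSpanTensor hx⟩
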